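/- arXiv:2201.01485 — 3 statements merged into one kernel-verified Lean document; each statement's English description precedes it below -/
import Mathlib

section
/- Fix an integer M ≥ 1, a real τ > 0, and constants c₁ > 0 and c₂ > 0. Define ξ(θ) = (θ·Γ̄(M, (θ/τ)²) − τ·Γ̄(M + 1/2, (θ/τ)²)) / Γ(M) and f(θ) = c₁·ξ(θ) + c₂·θ for θ ≥ 0. Then f is strictly increasing on [0, ∞), and f(0) = −c₁·τ·Γ(M + 1/2)/Γ(M) < 0. -/
/-- The upper incomplete gamma function `Γ̄(s, x) = ∫_x^∞ t^{s-1} e^{-t} dt`. -/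
noncomputable def uGamma (s x : ℝ) : ℝ := ∫ t in Set.Ioi x, t ^ (s - 1) * Real.exp (-t)

/-!
The function `x ↦ x ^ r * Γ̄(s, x) - Γ̄(s + r, x)` is an envelope: since the integrand
`(x ^ r - t ^ r) * t ^ (s - 1) * exp (-t)` is nonpositive for `t ≥ x`, raising the lower limit of
integration from `x` to `y` with the factor `x ^ r` kept fixed does not decrease the value, and then
raising the factor to `y ^ r` increases it strictly because `Γ̄(s, y) > 0`. With `r = 1 / 2` and
`x = (θ / τ) ^ 2` this is `ξ(θ)` up to the factor `τ / Γ(s)`, so `ξ` itself is strictly increasing.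
-/

open MeasureTheory Set

lemma integrableOn_Ioi_rpow_mul_exp_neg {s x : ℝ} (hs : 0 < s) (hx : 0 ≤ x) :
    IntegrableOn (fun t : ℝ ↦ t ^ (s - 1) * Real.exp (-t)) (Ioi x) := by
  simpa only [mul_comm] using (Real.GammaIntegral_convergent hs).mono_set (Ioi_subset_Ioi hx)

lemma intervalIntegrable_rpow_mul_exp_neg {s : ℝ} (hs : 0 < s) (x y : ℝ) :
    IntervalIntegrable (fun t : ℝ ↦ t ^ (s - 1) * Real.exp (-t)) volume x y :=
  (intervalIntegral.intervalIntegrable_rpow' (by linarith)).mul_continuousOn (by fun_prop)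

lemma uGamma_zero {s : ℝ} (hs : 0 < s) : uGamma s 0 = Real.Gamma s := by
  simp only [uGamma, Real.Gamma_eq_integral hs, mul_comm]

lemma uGamma_pos {s x : ℝ} (hs : 0 < s) (hx : 0 ≤ x) : 0 < uGamma s x := by
  have integrand_pos : ∀ t ∈ Ioi x, 0 < t ^ (s - 1) * Real.exp (-t) := fun t ht ↦
    mul_pos (Real.rpow_pos_of_pos (hx.trans_lt ht) _) (Real.exp_pos _)
  rw [uGamma, setIntegral_pos_iff_support_of_nonneg_ae
    (ae_restrict_of_forall_mem measurableSet_Ioi fun t ht ↦ (integrand_pos t ht).le)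
    (integrableOn_Ioi_rpow_mul_exp_neg hs hx),
    inter_eq_right.mpr fun t ht ↦ Function.mem_support.mpr (integrand_pos t ht).ne',
    Real.volume_Ioi]
  exact ENNReal.zero_lt_top

lemma uGamma_sub_uGamma {s x y : ℝ} (hs : 0 < s) (hx : 0 ≤ x) (hy : 0 ≤ y) :
    uGamma s x - uGamma s y = ∫ t in x..y, t ^ (s - 1) * Real.exp (-t) :=
  intervalIntegral.integral_Ioi_sub_Ioi' (integrableOn_Ioi_rpow_mul_exp_neg hs hx)
    (integrableOn_Ioi_rpow_mul_exp_neg hs hy)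

lemma rpow_mul_uGamma_sub_uGamma_le {s r x y : ℝ} (hs : 0 < s) (hr : 0 ≤ r) (hx : 0 ≤ x)
    (hxy : x ≤ y) :
    x ^ r * (uGamma s x - uGamma s y) ≤ uGamma (s + r) x - uGamma (s + r) y := by
  have hsr : 0 < s + r := by positivity
  have hy : 0 ≤ y := hx.trans hxy
  rw [uGamma_sub_uGamma hs hx hy, uGamma_sub_uGamma hsr hx hy,
    ← intervalIntegral.integral_const_mul]
  refine intervalIntegral.integral_mono_on_of_le_Ioo hxy
    ((intervalIntegrable_rpow_mul_exp_neg hs x y).const_mul _)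
    (intervalIntegrable_rpow_mul_exp_neg hsr x y) fun t ht ↦ ?_
  have ht_pos : 0 < t := hx.trans_lt ht.1
  calc x ^ r * (t ^ (s - 1) * Real.exp (-t))
      ≤ t ^ r * (t ^ (s - 1) * Real.exp (-t)) := by
        gcongr
        exact ht.1.le
    _ = t ^ (s + r - 1) * Real.exp (-t) := by
        rw [← mul_assoc, ← Real.rpow_add ht_pos, add_sub_assoc', add_comm r s]

lemma strictMonoOn_rpow_mul_uGamma_sub_uGamma {s r : ℝ} (hs : 0 < s) (hr : 0 < r) :
    StrictMonoOn (fun x ↦ x ^ r * uGamma s x - uGamma (s + r) x) (Ici 0) := by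
  intro x hx y hy hxy
  calc x ^ r * uGamma s x - uGamma (s + r) x
      ≤ x ^ r * uGamma s y - uGamma (s + r) y := by
        linarith [rpow_mul_uGamma_sub_uGamma_le hs hr.le hx hxy.le]
    _ < y ^ r * uGamma s y - uGamma (s + r) y := by
        gcongr
        exact uGamma_pos hs hy

lemma strictMonoOn_mul_uGamma_sub_mul_uGamma {s τ : ℝ} (hs : 0 < s) (hτ : 0 < τ) :
    StrictMonoOn
      (fun θ ↦ θ * uGamma s ((θ / τ) ^ 2) - τ * uGamma (s + 1 / 2) ((θ / τ) ^ 2)) (Ici 0) := by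
  have square_strictMonoOn : StrictMonoOn (fun θ ↦ (θ / τ) ^ 2) (Ici 0) := by
    intro a (ha : 0 ≤ a) b _ hab
    dsimp only
    gcongr
  have envelope_strictMonoOn := (strictMonoOn_rpow_mul_uGamma_sub_uGamma hs one_half_pos).comp
    square_strictMonoOn fun θ _ ↦ sq_nonneg (θ / τ)
  refine ((strictMono_mul_left_of_pos hτ).comp_strictMonoOn envelope_strictMonoOn).congr
    fun θ (hθ : 0 ≤ θ) ↦ ?_
  have sqrt_square : ((θ / τ) ^ 2) ^ (1 / 2 : ℝ) = θ / τ := by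
    rw [← Real.sqrt_eq_rpow, Real.sqrt_sq (by positivity)]
  simp only [Function.comp_apply, sqrt_square]
  field_simp

theorem f_strictMonoOn_and_neg_at_zero_general {s τ c₁ c₂ : ℝ} (hs : 0 < s) (hτ : 0 < τ)
    (hc₁ : 0 < c₁) (hc₂ : 0 ≤ c₂) {ξ f : ℝ → ℝ}
    (hξ : ∀ θ, ξ θ = (θ * uGamma s ((θ / τ) ^ 2) - τ * uGamma (s + 1 / 2) ((θ / τ) ^ 2))
      / Real.Gamma s)
    (hf : ∀ θ, f θ = c₁ * ξ θ + c₂ * θ) :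
    StrictMonoOn f (Ici 0) ∧
      f 0 = -(c₁ * τ * Real.Gamma (s + 1 / 2) / Real.Gamma s) ∧ f 0 < 0 := by
  have f_zero : f 0 = -(c₁ * τ * Real.Gamma (s + 1 / 2) / Real.Gamma s) := by
    rw [hf, hξ, zero_div, zero_pow two_ne_zero, uGamma_zero hs,
      uGamma_zero (by positivity)]
    ring
  have ξ_strictMonoOn : StrictMonoOn ξ (Ici 0) := by
    intro a ha b hb hab
    rw [hξ, hξ]
    exact div_lt_div_of_pos_right
      (strictMonoOn_mul_uGamma_sub_mul_uGamma hs hτ ha hb hab) (Real.Gamma_pos_of_pos hs)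
  refine ⟨?_, f_zero, ?_⟩
  · rw [funext hf]
    exact ((strictMono_mul_left_of_pos hc₁).comp_strictMonoOn ξ_strictMonoOn).add_monotone
      ((monotone_id.const_mul hc₂).monotoneOn _)
  · rw [f_zero, neg_lt_zero]
    positivity

/-- For `M ≥ 1`, `τ > 0`, `c₁, c₂ > 0`, the function `f(θ) = c₁·ξ(θ) + c₂·θ`, with
`ξ(θ) = (θ·Γ̄(M,(θ/τ)²) − τ·Γ̄(M+1/2,(θ/τ)²)) / Γ(M)`, is strictly increasing on `[0,∞)`
and `f(0) = −c₁·τ·Γ(M+1/2)/Γ(M) < 0`. -/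
theorem f_strictMonoOn_and_neg_at_zero
    (M : ℕ) (hM : 1 ≤ M) (τ : ℝ) (hτ : 0 < τ) (c₁ c₂ : ℝ) (hc₁ : 0 < c₁) (hc₂ : 0 < c₂)
    (ξ f : ℝ → ℝ)
    (hξ : ∀ θ, ξ θ = (θ * uGamma M ((θ / τ) ^ 2) - τ * uGamma (M + 1 / 2) ((θ / τ) ^ 2))
      / Real.Gamma M)
    (hf : ∀ θ, f θ = c₁ * ξ θ + c₂ * θ) :
    StrictMonoOn f (Set.Ici 0) ∧
      f 0 = -(c₁ * τ * Real.Gamma (M + 1 / 2) / Real.Gamma M) ∧ f 0 < 0 :=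
  f_strictMonoOn_and_neg_at_zero_general (Nat.cast_pos.mpr hM) hτ hc₁ hc₂.le hξ hf
end

section
/- Fix an integer M ≥ 1, a real τ > 0, and constants c₁ > 0 and c₂ > 0. Define ϖ(θ) = (θ²·Γ̄(M, (θ/τ)²) − 2θτ·Γ̄(M + 1/2, (θ/τ)²) + τ²·Γ̄(M + 1, (θ/τ)²)) / Γ(M) and MSE(θ) = c₂·(M·τ² + θ²) + c₁·ϖ(θ) for θ ≥ 0. Then MSE is strictly convex on [0, ∞). -/
/-!
If `T` has the gamma distribution with shape `s` and rate `1`, the incomplete gamma functions are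
truncated moments of `T`, and on `[0, ∞)` the three of them add up to
`ϖ(θ) = 𝔼[(τ√T - θ)₊²]`. This is an average of convex functions of `θ`, hence convex, and the
quadratic term `c₂θ²` makes the sum strictly convex.
-/

open MeasureTheory ProbabilityTheory Set

section Convexity

variable {E : Type*} [AddCommMonoid E] [SMul ℝ E] {s : Set E}

theorem strictConvexOn_const_mul {f : E → ℝ} {c : ℝ} (hf : StrictConvexOn ℝ s f) (hc : 0 < c) :
    StrictConvexOn ℝ s fun x ↦ c * f x := by
  refine ⟨hf.1, fun x hx y hy hxy a b ha hb hab ↦ ?_⟩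
  calc c * f (a • x + b • y) < c * (a • f x + b • f y) :=
        mul_lt_mul_of_pos_left (hf.2 hx hy hxy ha hb hab) hc
    _ = a • (c * f x) + b • (c * f y) := by simp only [smul_eq_mul]; ring

variable {Ω : Type*} [MeasurableSpace Ω] {μ : Measure Ω}

theorem convexOn_integral {F : E → Ω → ℝ} (hs : Convex ℝ s)
    (hconv : ∀ᵐ ω ∂μ, ConvexOn ℝ s fun x ↦ F x ω) (hint : ∀ x ∈ s, Integrable (F x) μ) :
    ConvexOn ℝ s fun x ↦ ∫ ω, F x ω ∂μ := by
  refine ⟨hs, fun x hx y hy a b ha hb hab ↦ ?_⟩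
  have hx_int := (hint x hx).smul a
  have hy_int := (hint y hy).smul b
  calc ∫ ω, F (a • x + b • y) ω ∂μ
      ≤ ∫ ω, (a • F x + b • F y) ω ∂μ := by
        refine integral_mono_ae (hint _ (hs hx hy ha hb hab)) (hx_int.add hy_int) ?_
        filter_upwards [hconv] with ω hω using hω.2 hx hy ha hb hab
    _ = a • ∫ ω, F x ω ∂μ + b • ∫ ω, F y ω ∂μ := by
        rw [integral_add' hx_int hy_int]
        simp only [Pi.smul_apply, integral_smul]

theorem convexOn_sq_max_sub (p : ℝ) : ConvexOn ℝ univ fun θ : ℝ ↦ max (p - θ) 0 ^ 2 :=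
  (((convexOn_const p convex_univ).sub (concaveOn_id convex_univ)).sup
    (convexOn_const 0 convex_univ)).pow (fun _ _ ↦ le_max_right _ _) 2

theorem convexOn_integral_sq_max_sub [IsFiniteMeasure μ] {X : Ω → ℝ} (hX : MemLp X 2 μ) :
    ConvexOn ℝ univ fun θ ↦ ∫ ω, max (X ω - θ) 0 ^ 2 ∂μ :=
  convexOn_integral convex_univ (ae_of_all μ fun ω ↦ convexOn_sq_max_sub (X ω))
    fun θ _ ↦ (hX.sub (memLp_const θ)).pos_part.integrable_sq

end Convexity

section GammaMoments

variable {s p x : ℝ}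

theorem measurable_gammaPDF (a r : ℝ) : Measurable (gammaPDF a r) :=
  (measurable_gammaPDFReal a r).ennreal_ofReal

theorem toReal_gammaPDF {a r : ℝ} (ha : 0 < a) (hr : 0 < r) (t : ℝ) :
    (gammaPDF a r t).toReal = gammaPDFReal a r t :=
  ENNReal.toReal_ofReal (gammaPDFReal_nonneg ha hr t)

theorem gammaPDFReal_one_mul_rpow {t : ℝ} (ht : 0 < t) :
    gammaPDFReal s 1 t * t ^ p = (t ^ (s + p - 1) * Real.exp (-t)) / Real.Gamma s := by
  rw [gammaPDFReal, if_pos ht.le, add_sub_right_comm, Real.rpow_add ht, Real.one_rpow, one_mul]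
  ring

theorem integrable_rpow_gammaMeasure (hs : 0 < s) (hsp : 0 < s + p) :
    Integrable (fun t ↦ t ^ p) (gammaMeasure s 1) := by
  rw [gammaMeasure, integrable_withDensity_iff_integrable_smul' (measurable_gammaPDF s 1)
    (ae_of_all _ fun _ ↦ ENNReal.ofReal_lt_top)]
  simp only [toReal_gammaPDF hs one_pos, smul_eq_mul]
  have hsupp : Function.support (fun t ↦ gammaPDFReal s 1 t * t ^ p) ⊆ Ici 0 := fun t ht ↦
    by_contra fun hneg ↦ ht (mul_eq_zero_of_left (if_neg hneg) _)
  rw [← integrableOn_iff_integrable_of_support_subset hsupp, integrableOn_Ici_iff_integrableOn_Ioi]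
  refine IntegrableOn.congr_fun ((Real.GammaIntegral_convergent hsp).div_const (Real.Gamma s))
    (fun t ht ↦ ?_) measurableSet_Ioi
  rw [gammaPDFReal_one_mul_rpow ht, mul_comm (Real.exp (-t))]

theorem setIntegral_Ioi_rpow_gammaMeasure (hs : 0 < s) (hx : 0 ≤ x) :
    ∫ t in Ioi x, t ^ p ∂gammaMeasure s 1 = uGamma (s + p) x / Real.Gamma s := by
  rw [gammaMeasure, setIntegral_withDensity_eq_setIntegral_toReal_smul (measurable_gammaPDF s 1)
    (ae_of_all _ fun _ ↦ ENNReal.ofReal_lt_top) _ measurableSet_Ioi, uGamma, ← integral_div]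
  refine setIntegral_congr_fun measurableSet_Ioi fun t ht ↦ ?_
  rw [toReal_gammaPDF hs one_pos, smul_eq_mul, gammaPDFReal_one_mul_rpow (hx.trans_lt ht)]

theorem memLp_two_mul_sqrt_gammaMeasure (hs : 0 < s) (τ : ℝ) :
    MemLp (fun t ↦ τ * √t) 2 (gammaMeasure s 1) := by
  have hid : Integrable (fun t ↦ t) (gammaMeasure s 1) := by
    simpa only [Real.rpow_one] using integrable_rpow_gammaMeasure hs (p := 1) (by positivity)
  refine MemLp.const_mul ?_ τ
  rw [memLp_two_iff_integrable_sq Real.continuous_sqrt.aestronglyMeasurable]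
  simpa only [Real.sq_sqrt'] using hid.pos_part

theorem sq_max_mul_sqrt_sub_eq_indicator {τ θ : ℝ} (hτ : 0 < τ) (hθ : 0 ≤ θ) (t : ℝ) :
    max (τ * √t - θ) 0 ^ 2 =
      (Ioi ((θ / τ) ^ 2)).indicator (fun t ↦ (τ * √t - θ) ^ 2) t := by
  have hiff : t ∈ Ioi ((θ / τ) ^ 2) ↔ θ < τ * √t := by
    rw [mem_Ioi, ← Real.lt_sqrt (by positivity), div_lt_iff₀' hτ]
  by_cases ht : t ∈ Ioi ((θ / τ) ^ 2)
  · rw [indicator_of_mem ht, max_eq_left (sub_nonneg.2 (hiff.1 ht).le)]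
  · rw [indicator_of_notMem ht, max_eq_right (sub_nonpos.2 (not_lt.1 (mt hiff.2 ht))), sq, zero_mul]

theorem setIntegral_Ioi_sq_mul_sqrt_sub_gammaMeasure (hs : 0 < s) (hx : 0 ≤ x) (τ θ : ℝ) :
    ∫ t in Ioi x, (τ * √t - θ) ^ 2 ∂gammaMeasure s 1 =
      (θ ^ 2 * uGamma s x - 2 * θ * τ * uGamma (s + 1 / 2) x + τ ^ 2 * uGamma (s + 1) x) /
        Real.Gamma s := by
  have hint {q : ℝ} (hq : 0 ≤ q) (c : ℝ) :
      IntegrableOn (fun t ↦ c * t ^ q) (Ioi x) (gammaMeasure s 1) :=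
    ((integrable_rpow_gammaMeasure hs (by positivity)).const_mul c).integrableOn
  have hint_zero := hint le_rfl (θ ^ 2)
  have hint_half := hint one_half_pos.le (2 * θ * τ)
  have hint_one := hint zero_le_one (τ ^ 2)
  calc ∫ t in Ioi x, (τ * √t - θ) ^ 2 ∂gammaMeasure s 1
      = ∫ t in Ioi x, (θ ^ 2 * t ^ (0 : ℝ) - 2 * θ * τ * t ^ (1 / 2 : ℝ) + τ ^ 2 * t ^ (1 : ℝ))
          ∂gammaMeasure s 1 := by
        refine setIntegral_congr_fun measurableSet_Ioi fun t ht ↦ ?_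
        have ht_sq : √t ^ 2 = t := Real.sq_sqrt (hx.trans ht.le)
        simp only [← Real.sqrt_eq_rpow, Real.rpow_zero, Real.rpow_one]
        linear_combination τ ^ 2 * ht_sq
    _ = _ := by
        rw [integral_add (hint_zero.fun_sub hint_half) hint_one,
          integral_sub hint_zero hint_half]
        simp only [integral_const_mul, setIntegral_Ioi_rpow_gammaMeasure hs hx, add_zero]
        ring

theorem integral_sq_max_mul_sqrt_sub_gammaMeasure (hs : 0 < s) {τ θ : ℝ} (hτ : 0 < τ)
    (hθ : 0 ≤ θ) :
    ∫ t, max (τ * √t - θ) 0 ^ 2 ∂gammaMeasure s 1 =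
      (θ ^ 2 * uGamma s ((θ / τ) ^ 2) - 2 * θ * τ * uGamma (s + 1 / 2) ((θ / τ) ^ 2)
        + τ ^ 2 * uGamma (s + 1) ((θ / τ) ^ 2)) / Real.Gamma s := by
  simp only [sq_max_mul_sqrt_sub_eq_indicator hτ hθ]
  rw [integral_indicator measurableSet_Ioi,
    setIntegral_Ioi_sq_mul_sqrt_sub_gammaMeasure hs (sq_nonneg _)]

end GammaMoments

theorem mse_strictConvexOn_general {s τ c₁ c₂ : ℝ} (hs : 0 < s) (hτ : 0 < τ) (hc₁ : 0 ≤ c₁)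
    (hc₂ : 0 < c₂) {ϖ MSE : ℝ → ℝ}
    (hϖ : ∀ θ, 0 ≤ θ → ϖ θ = (θ ^ 2 * uGamma s ((θ / τ) ^ 2)
      - 2 * θ * τ * uGamma (s + 1 / 2) ((θ / τ) ^ 2)
      + τ ^ 2 * uGamma (s + 1) ((θ / τ) ^ 2)) / Real.Gamma s)
    (hMSE : ∀ θ, 0 ≤ θ → MSE θ = c₂ * (s * τ ^ 2 + θ ^ 2) + c₁ * ϖ θ) :
    StrictConvexOn ℝ (Ici 0) MSE := by
  have : IsProbabilityMeasure (gammaMeasure s 1) := isProbabilityMeasure_gammaMeasure hs one_pos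
  have hϖ_conv : ConvexOn ℝ (Ici 0) ϖ := by
    refine ((convexOn_integral_sq_max_sub (memLp_two_mul_sqrt_gammaMeasure hs τ)).subset
      (subset_univ _) (convex_Ici 0)).congr fun θ hθ ↦ ?_
    rw [hϖ θ hθ]
    exact integral_sq_max_mul_sqrt_sub_gammaMeasure hs hτ hθ
  have hquad : StrictConvexOn ℝ (Ici 0) fun θ : ℝ ↦ c₂ * (θ ^ 2 + s * τ ^ 2) :=
    strictConvexOn_const_mul ((strictConvexOn_pow le_rfl).add_const _) hc₂
  refine (hquad.add_convexOn (hϖ_conv.smul hc₁)).congr fun θ hθ ↦ ?_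
  simp only [Pi.add_apply, smul_eq_mul, hMSE θ hθ, add_comm (s * τ ^ 2)]

/-- For `M ≥ 1`, `τ > 0`, `c₁, c₂ > 0`, the worst-case MSE
`MSE(θ) = c₂·(M·τ² + θ²) + c₁·ϖ(θ)`, with
`ϖ(θ) = (θ²·Γ̄(M,(θ/τ)²) − 2θτ·Γ̄(M+1/2,(θ/τ)²) + τ²·Γ̄(M+1,(θ/τ)²)) / Γ(M)`,
is strictly convex on `[0,∞)`. -/
theorem mse_strictConvexOn
    (M : ℕ) (hM : 1 ≤ M) (τ : ℝ) (hτ : 0 < τ) (c₁ c₂ : ℝ) (hc₁ : 0 < c₁) (hc₂ : 0 < c₂)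
    (ϖ MSE : ℝ → ℝ)
    (hϖ : ∀ θ, ϖ θ = (θ ^ 2 * uGamma M ((θ / τ) ^ 2)
      - 2 * θ * τ * uGamma (M + 1 / 2) ((θ / τ) ^ 2)
      + τ ^ 2 * uGamma (M + 1) ((θ / τ) ^ 2)) / Real.Gamma M)
    (hMSE : ∀ θ, MSE θ = c₂ * (M * τ ^ 2 + θ ^ 2) + c₁ * ϖ θ) :
    StrictConvexOn ℝ (Set.Ici 0) MSE :=
  mse_strictConvexOn_general (Nat.cast_pos.2 hM) hτ hc₁.le hc₂ (fun θ _ ↦ hϖ θ) fun θ _ ↦ hMSE θ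
end

section
/- Fix an integer M ≥ 1, reals τ > 0 and θ > 0, and let μ be the product probability measure on ℝ^{2M} whose 2M coordinates are i.i.d. real Gaussians with mean 0 and variance 1/2. Define the block soft-thresholding operator g(x, θ) = (1 − θ/‖x‖)·x if ‖x‖ ≥ θ and g(x, θ) = 0 otherwise, and the risk R(h) = ∫ ‖g(h + τx, θ) − h‖² dμ(x) for h ∈ ℝ^{2M}. Then for every sequence (h_k) in ℝ^{2M} with ‖h_k‖ → ∞, one has R(h_k) → M·τ² + θ². -/
open MeasureTheory ProbabilityTheory

/-!
As soon as `‖x‖ ≥ θ`, block soft-thresholding subtracts `θ` times the unit vector in the direction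
of `x`. When the signal `h` is far away, the direction of `h + w` is nearly that of `h`, so the
error `g (h + w, θ) - h` is asymptotically `w - θ • normalize h`. For centered noise `W` the cross
term of `‖W - θ • normalize h‖ ^ 2` integrates to zero, leaving `E‖W‖ ^ 2 + θ ^ 2`. The error and
its approximation both have norm at most `‖W‖ + |θ|`, so dominated convergence transfers this value
to the limit of the risk.
-/

open Filter Bornology NormedSpace
open scoped Topology NNReal ENNReal

lemma abs_norm_sq_sub_norm_sq_le {E : Type*} [SeminormedAddCommGroup E] (a b : E) :
    |‖a‖ ^ 2 - ‖b‖ ^ 2| ≤ (‖a‖ + ‖b‖) * ‖a - b‖ := by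
  rw [sq_sub_sq, abs_mul, abs_of_nonneg (by positivity)]
  gcongr
  exact abs_norm_sub_norm_le a b

section Shrinkage

variable {E : Type*} [NormedAddCommGroup E] [NormedSpace ℝ E]

lemma norm_normalize_le_one (x : E) : ‖normalize x‖ ≤ 1 := by
  rcases eq_or_ne x 0 with rfl | hx
  · simp
  · exact (norm_normalize hx).le

lemma norm_mul_norm_normalize_sub_normalize_le (x y : E) :
    ‖y‖ * ‖normalize x - normalize y‖ ≤ 2 * ‖x - y‖ := by
  have hsplit : ‖y‖ • (normalize x - normalize y) = (‖y‖ - ‖x‖) • normalize x + (x - y) := by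
    rw [smul_sub, sub_smul, norm_smul_normalize, norm_smul_normalize]
    abel
  calc ‖y‖ * ‖normalize x - normalize y‖
      = ‖(‖y‖ - ‖x‖) • normalize x + (x - y)‖ := by rw [← hsplit, norm_smul, norm_norm]
    _ ≤ |‖y‖ - ‖x‖| * ‖normalize x‖ + ‖x - y‖ := by
        simpa only [norm_smul, Real.norm_eq_abs] using
          norm_add_le ((‖y‖ - ‖x‖) • normalize x) (x - y)
    _ ≤ ‖x - y‖ * 1 + ‖x - y‖ := by
        gcongr
        · exact (abs_norm_sub_norm_le y x).trans_eq (norm_sub_rev y x)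
        · exact norm_normalize_le_one x
    _ = 2 * ‖x - y‖ := by ring

lemma tendsto_normalize_add_sub_normalize_cobounded (w : E) :
    Tendsto (fun h : E ↦ normalize (h + w) - normalize h) (cobounded E) (𝓝 0) := by
  refine squeeze_zero_norm' ?_ (tendsto_norm_cobounded_atTop.const_div_atTop (2 * ‖w‖))
  filter_upwards [tendsto_norm_cobounded_atTop.eventually_gt_atTop 0] with h hpos
  rw [le_div_iff₀' hpos]
  simpa only [add_sub_cancel_left] using norm_mul_norm_normalize_sub_normalize_le (h + w) h

/-- The block soft-thresholding operator `g(x, θ)`, with the threshold as first argument. -/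
noncomputable def blockSoftThreshold (θ : ℝ) (x : E) : E :=
  if θ ≤ ‖x‖ then (1 - θ / ‖x‖) • x else 0

lemma blockSoftThreshold_of_le {θ : ℝ} {x : E} (h : θ ≤ ‖x‖) :
    blockSoftThreshold θ x = x - θ • normalize x := by
  rw [blockSoftThreshold, if_pos h, NormedSpace.normalize, smul_smul, sub_smul, one_smul,
    div_eq_mul_inv]

lemma norm_blockSoftThreshold_sub_self_le (θ : ℝ) (x : E) :
    ‖blockSoftThreshold θ x - x‖ ≤ |θ| := by
  rcases le_or_gt θ ‖x‖ with h | h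
  · rw [blockSoftThreshold_of_le h, sub_sub_cancel_left, norm_neg, norm_smul, Real.norm_eq_abs]
    exact mul_le_of_le_one_right (abs_nonneg θ) (norm_normalize_le_one x)
  · rw [blockSoftThreshold, if_neg h.not_ge, zero_sub, norm_neg]
    exact h.le.trans (le_abs_self θ)

lemma norm_blockSoftThreshold_add_sub_le (θ : ℝ) (h w : E) :
    ‖blockSoftThreshold θ (h + w) - h‖ ≤ ‖w‖ + |θ| := by
  calc ‖blockSoftThreshold θ (h + w) - h‖
      = ‖w + (blockSoftThreshold θ (h + w) - (h + w))‖ := by congr 1; abel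
    _ ≤ ‖w‖ + |θ| := norm_add_le_of_le le_rfl (norm_blockSoftThreshold_sub_self_le θ (h + w))

lemma norm_sub_smul_normalize_le (θ : ℝ) (h w : E) : ‖w - θ • normalize h‖ ≤ ‖w‖ + |θ| := by
  refine norm_sub_le_of_le le_rfl ?_
  rw [norm_smul, Real.norm_eq_abs]
  exact mul_le_of_le_one_right (abs_nonneg θ) (norm_normalize_le_one h)

lemma tendsto_blockSoftThreshold_error_cobounded (θ : ℝ) (w : E) :
    Tendsto (fun h : E ↦ (blockSoftThreshold θ (h + w) - h) - (w - θ • normalize h))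
      (cobounded E) (𝓝 0) := by
  have hdir := (tendsto_normalize_add_sub_normalize_cobounded w).const_smul (-θ)
  rw [smul_zero] at hdir
  refine hdir.congr' ?_
  filter_upwards [tendsto_norm_cobounded_atTop.eventually_ge_atTop (θ + ‖w‖)] with h hh
  have habove : θ ≤ ‖h + w‖ := by linarith [norm_sub_le_norm_add h w]
  rw [blockSoftThreshold_of_le habove]
  module

lemma tendsto_norm_sq_blockSoftThreshold_error_cobounded (θ : ℝ) (w : E) :
    Tendsto (fun h : E ↦ ‖blockSoftThreshold θ (h + w) - h‖ ^ 2 - ‖w - θ • normalize h‖ ^ 2)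
      (cobounded E) (𝓝 0) := by
  have hbound := (tendsto_blockSoftThreshold_error_cobounded θ w).norm.const_mul
    (‖w‖ + |θ| + (‖w‖ + |θ|))
  rw [norm_zero, mul_zero] at hbound
  refine squeeze_zero_norm (fun h ↦ ?_) hbound
  refine (abs_norm_sq_sub_norm_sq_le _ _).trans ?_
  gcongr
  · exact norm_blockSoftThreshold_add_sub_le θ h w
  · exact norm_sub_smul_normalize_le θ h w

end Shrinkage

section Risk

variable {Ω E : Type*} [MeasurableSpace Ω] {P : Measure Ω} [NormedAddCommGroup E] {W : Ω → E}

lemma aestronglyMeasurable_blockSoftThreshold [NormedSpace ℝ E] (θ : ℝ)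
    (hW : AEStronglyMeasurable W P) :
    AEStronglyMeasurable (fun ω ↦ blockSoftThreshold θ (W ω)) P := by
  let shrinkage : ℝ → ℝ := fun r ↦ if θ ≤ r then 1 - θ / r else 0
  have hshrinkage : Measurable shrinkage :=
    Measurable.ite measurableSet_Ici (by fun_prop) measurable_const
  have hfactor : (fun ω ↦ blockSoftThreshold θ (W ω)) = fun ω ↦ shrinkage ‖W ω‖ • W ω := by
    funext ω
    simp only [blockSoftThreshold, shrinkage, ite_smul, zero_smul]
  rw [hfactor]
  exact (hshrinkage.comp_aemeasurable hW.norm.aemeasurable).aestronglyMeasurable.smul hW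

/-- The mean squared error of the block soft-thresholding denoiser at the signal `h`, observed
under the additive noise `W` on the probability space `(Ω, P)`. -/
noncomputable def blockSoftThresholdRisk [NormedSpace ℝ E] (P : Measure Ω) (W : Ω → E) (θ : ℝ)
    (h : E) : ℝ :=
  ∫ ω, ‖blockSoftThreshold θ (h + W ω) - h‖ ^ 2 ∂P

lemma memLp_blockSoftThreshold_error [NormedSpace ℝ E] [IsFiniteMeasure P]
    (hW : MemLp W 2 P) (θ : ℝ) (h : E) :
    MemLp (fun ω ↦ blockSoftThreshold θ (h + W ω) - h) 2 P := by
  refine (hW.norm.add (memLp_const |θ|)).mono' ?_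
    (.of_forall fun ω ↦ norm_blockSoftThreshold_add_sub_le θ h (W ω))
  exact (aestronglyMeasurable_blockSoftThreshold θ
    (aestronglyMeasurable_const.add hW.aestronglyMeasurable)).sub aestronglyMeasurable_const

lemma tendsto_blockSoftThresholdRisk_sub_cobounded [NormedSpace ℝ E] [IsFiniteMeasure P]
    (hW : MemLp W 2 P) (θ : ℝ) :
    Tendsto (fun h ↦ blockSoftThresholdRisk P W θ h - ∫ ω, ‖W ω - θ • normalize h‖ ^ 2 ∂P)
      (cobounded E) (𝓝 0) := by
  have : (cobounded E).IsCountablyGenerated := comap_norm_atTop (E := E) ▸ inferInstance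
  have hrisk (h : E) : Integrable (fun ω ↦ ‖blockSoftThreshold θ (h + W ω) - h‖ ^ 2) P :=
    (memLp_blockSoftThreshold_error hW θ h).norm.integrable_sq
  have hproxy (h : E) : Integrable (fun ω ↦ ‖W ω - θ • normalize h‖ ^ 2) P :=
    (hW.sub (memLp_const _)).norm.integrable_sq
  have hdom : Integrable (fun ω ↦ (‖W ω‖ + |θ|) ^ 2) P :=
    (hW.norm.add (memLp_const |θ|)).integrable_sq
  have hlim := tendsto_integral_filter_of_dominated_convergence (l := cobounded E)
    (fun ω ↦ (‖W ω‖ + |θ|) ^ 2)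
    (.of_forall fun h ↦ ((hrisk h).sub (hproxy h)).aestronglyMeasurable)
    (.of_forall fun h ↦ .of_forall fun ω ↦ abs_sub_le_of_nonneg_of_le (sq_nonneg _)
      (pow_le_pow_left₀ (norm_nonneg _) (norm_blockSoftThreshold_add_sub_le θ h (W ω)) 2)
      (sq_nonneg _)
      (pow_le_pow_left₀ (norm_nonneg _) (norm_sub_smul_normalize_le θ h (W ω)) 2))
    hdom
    (.of_forall fun ω ↦ tendsto_norm_sq_blockSoftThreshold_error_cobounded θ (W ω))
  rw [integral_zero] at hlim
  exact hlim.congr fun h ↦ integral_sub (hrisk h) (hproxy h)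

variable [InnerProductSpace ℝ E] [IsProbabilityMeasure P]

lemma integral_norm_sub_const_sq_of_integral_eq_zero [CompleteSpace E] (hW : MemLp W 2 P)
    (hmean : ∫ ω, W ω ∂P = 0) (u : E) :
    ∫ ω, ‖W ω - u‖ ^ 2 ∂P = ∫ ω, ‖W ω‖ ^ 2 ∂P + ‖u‖ ^ 2 := by
  have hint : Integrable W P := hW.integrable one_le_two
  have hcross : ∫ ω, inner ℝ (W ω) u ∂P = 0 := by
    simp_rw [real_inner_comm u]
    rw [integral_inner hint, hmean, inner_zero_right]
  have hinner : Integrable (fun ω ↦ 2 * inner ℝ (W ω) u) P := (hint.inner_const u).const_mul 2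
  have hsq : Integrable (fun ω ↦ ‖W ω‖ ^ 2) P := hW.norm.integrable_sq
  simp_rw [norm_sub_sq_real]
  rw [integral_add (hsq.sub' hinner) (integrable_const _), integral_sub hsq hinner,
    integral_const_mul, hcross, mul_zero, sub_zero, integral_const, probReal_univ, one_smul]

theorem risk_tendsto_at_infinite_norm_general [CompleteSpace E] (hW : MemLp W 2 P)
    (hmean : ∫ ω, W ω ∂P = 0) (θ : ℝ) :
    Tendsto (blockSoftThresholdRisk P W θ) (cobounded E) (𝓝 (∫ ω, ‖W ω‖ ^ 2 ∂P + θ ^ 2)) := by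
  have hvalue : ∀ᶠ h : E in cobounded E,
      ∫ ω, ‖W ω - θ • normalize h‖ ^ 2 ∂P = ∫ ω, ‖W ω‖ ^ 2 ∂P + θ ^ 2 := by
    filter_upwards [tendsto_norm_cobounded_atTop.eventually_gt_atTop 0] with h hpos
    rw [integral_norm_sub_const_sq_of_integral_eq_zero hW hmean, norm_smul,
      NormedSpace.norm_normalize (norm_pos_iff.1 hpos), mul_one, Real.norm_eq_abs, sq_abs]
  have hproxy := tendsto_const_nhds.congr' (EventuallyEq.symm hvalue)
  simpa only [sub_add_cancel, zero_add] using
    (tendsto_blockSoftThresholdRisk_sub_cobounded hW θ).add hproxy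

end Risk

section ProductNoise

variable {ι : Type*} [Fintype ι] {ν : ι → Measure ℝ} [∀ i, IsProbabilityMeasure (ν i)]

lemma memLp_toLp_pi {p : ℝ≥0∞} (hν : ∀ i, MemLp id p (ν i)) :
    MemLp (fun x : ι → ℝ ↦ WithLp.toLp 2 x) p (Measure.pi ν) :=
  .of_eval_piLp fun i ↦ (hν i).comp_measurePreserving (measurePreserving_eval ν i)

lemma integral_toLp_pi (hν : ∀ i, Integrable id (ν i)) :
    ∫ x, WithLp.toLp 2 x ∂Measure.pi ν = WithLp.toLp 2 fun i ↦ ∫ y, y ∂ν i := by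
  ext i
  rw [eval_integral_piLp fun i ↦ integrable_comp_eval (μ := ν) (hν i)]
  exact integral_comp_eval (μ := ν) (f := id) (hν i).aestronglyMeasurable

lemma integral_norm_toLp_sq_pi (hν : ∀ i, Integrable (fun y ↦ y ^ 2) (ν i)) :
    ∫ x, ‖WithLp.toLp 2 x‖ ^ 2 ∂Measure.pi ν = ∑ i, ∫ y, y ^ 2 ∂ν i := by
  simp_rw [EuclideanSpace.real_norm_sq_eq]
  rw [integral_finsetSum _ fun i _ ↦ integrable_comp_eval (μ := ν) (hν i)]
  exact Finset.sum_congr rfl fun i _ ↦ integral_comp_eval (μ := ν) (hν i).aestronglyMeasurable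

lemma integral_sq_gaussianReal (m : ℝ) (v : ℝ≥0) :
    ∫ y, y ^ 2 ∂gaussianReal m v = m ^ 2 + v := by
  have hvar := variance_eq_sub (memLp_id_gaussianReal (μ := m) (v := v) 2)
  simp only [variance_id_gaussianReal, Pi.pow_apply, id_eq, integral_id_gaussianReal] at hvar
  linarith

lemma tendsto_blockSoftThresholdRisk_pi_gaussianReal (v : ℝ≥0) (τ θ : ℝ) :
    Tendsto (blockSoftThresholdRisk (Measure.pi fun _ : ι ↦ gaussianReal 0 v)
        (fun x ↦ τ • WithLp.toLp 2 x) θ)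
      (cobounded (EuclideanSpace ℝ ι)) (𝓝 (Fintype.card ι * v * τ ^ 2 + θ ^ 2)) := by
  have hcoord (_ : ι) : MemLp id 2 (gaussianReal 0 v) := memLp_id_gaussianReal 2
  have hmean : ∫ x, τ • WithLp.toLp 2 x ∂Measure.pi (fun _ : ι ↦ gaussianReal 0 v) = 0 := by
    rw [integral_smul, integral_toLp_pi fun i ↦ (hcoord i).integrable one_le_two]
    simp only [integral_id_gaussianReal]
    exact smul_zero τ
  have hpower : ∫ x, ‖τ • WithLp.toLp 2 x‖ ^ 2 ∂Measure.pi (fun _ : ι ↦ gaussianReal 0 v) =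
      Fintype.card ι * v * τ ^ 2 := by
    simp_rw [norm_smul, mul_pow, Real.norm_eq_abs, sq_abs]
    rw [integral_const_mul, integral_norm_toLp_sq_pi fun i ↦ (hcoord i).integrable_sq]
    simp only [integral_sq_gaussianReal, Finset.sum_const, Finset.card_univ, nsmul_eq_mul]
    ring
  rw [← hpower]
  exact risk_tendsto_at_infinite_norm_general ((memLp_toLp_pi hcoord).const_smul τ) hmean θ

lemma sqrt_sum_sq_eq_norm_toLp (x : ι → ℝ) : √(∑ i, x i ^ 2) = ‖WithLp.toLp 2 x‖ := by
  simp only [EuclideanSpace.norm_eq, Real.norm_eq_abs, sq_abs]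

lemma toLp_blockSoftThreshold (θ : ℝ) (x : ι → ℝ) :
    WithLp.toLp 2 (if θ ≤ √(∑ i, x i ^ 2) then (1 - θ / √(∑ i, x i ^ 2)) • x else 0) =
      blockSoftThreshold θ (WithLp.toLp 2 x) := by
  rw [blockSoftThreshold, sqrt_sum_sq_eq_norm_toLp, apply_ite (WithLp.toLp 2), WithLp.toLp_smul,
    WithLp.toLp_zero]

lemma integral_sum_sq_eq_blockSoftThresholdRisk {g : (ι → ℝ) → ι → ℝ} {τ θ : ℝ}
    (hg : ∀ x, g x =
      if θ ≤ √(∑ i, x i ^ 2) then (1 - θ / √(∑ i, x i ^ 2)) • x else 0)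
    (μ : Measure (ι → ℝ)) (h : ι → ℝ) :
    ∫ x, ∑ i, (g (h + τ • x) i - h i) ^ 2 ∂μ =
      blockSoftThresholdRisk μ (fun x ↦ τ • WithLp.toLp 2 x) θ (WithLp.toLp 2 h) := by
  have hg' (x : ι → ℝ) : WithLp.toLp 2 (g x) = blockSoftThreshold θ (WithLp.toLp 2 x) := by
    rw [hg, toLp_blockSoftThreshold]
  refine integral_congr_ae (.of_forall fun x ↦ ?_)
  simp only [← WithLp.toLp_smul, ← WithLp.toLp_add, ← hg', ← WithLp.toLp_sub,
    EuclideanSpace.real_norm_sq_eq, Pi.sub_apply]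

end ProductNoise

/-- The risk of the block soft-thresholding denoiser `g(·, θ)` at signal `h` under complex
Gaussian noise (modeled on `ℝ^{2M}` with i.i.d. `N(0, 1/2)` coordinates, Euclidean norm)
tends to `M·τ² + θ²` along any sequence of signals whose norm tends to infinity. -/
theorem risk_tendsto_at_infinite_norm
    (M : ℕ) (hM : 1 ≤ M) (τ θ : ℝ) (hτ : 0 < τ) (hθ : 0 < θ)
    (μ : Measure (Fin (2 * M) → ℝ))
    (hμ : μ = Measure.pi fun _ => gaussianReal 0 (1 / 2))
    (g : (Fin (2 * M) → ℝ) → ℝ → (Fin (2 * M) → ℝ))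
    (hg : ∀ x t, g x t =
      if t ≤ Real.sqrt (∑ i, x i ^ 2) then (1 - t / Real.sqrt (∑ i, x i ^ 2)) • x else 0)
    (R : (Fin (2 * M) → ℝ) → ℝ)
    (hR : ∀ h, R h = ∫ x, (∑ i, (g (h + τ • x) θ i - h i) ^ 2) ∂μ) :
    ∀ h : ℕ → Fin (2 * M) → ℝ,
      Filter.Tendsto (fun k => Real.sqrt (∑ i, h k i ^ 2)) Filter.atTop Filter.atTop →
      Filter.Tendsto (fun k => R (h k)) Filter.atTop (nhds (M * τ ^ 2 + θ ^ 2)) := by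
  intro h hh
  have hcobdd : Tendsto (fun k ↦ WithLp.toLp 2 (h k)) atTop
      (cobounded (EuclideanSpace ℝ (Fin (2 * M)))) := by
    simpa only [← tendsto_norm_atTop_iff_cobounded, sqrt_sum_sq_eq_norm_toLp] using hh
  have hpower : (Fintype.card (Fin (2 * M)) : ℝ) * ((1 / 2 : ℝ≥0) : ℝ) = M := by
    rw [Fintype.card_fin]
    push_cast
    ring
  have hlim := (tendsto_blockSoftThresholdRisk_pi_gaussianReal (1 / 2) τ θ).comp hcobdd
  rw [hpower, ← hμ] at hlim
  exact hlim.congr fun k ↦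
    ((hR (h k)).trans (integral_sum_sq_eq_blockSoftThresholdRisk (hg · θ) μ (h k))).symm
end
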